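/- arXiv:math/9210214 — 2 statements merged into one kernel-verified Lean document; each statement's English description precedes it below -/
import Mathlib

section
/- Let $a$ be a nonzero integer, $f$ a real-valued additive arithmetic function, $h$ real, and $x \ge 2$. Let $3|a| \le w \le z \le x$, let $P$ be the product of the primes in $(3|a|, w]$ and $R$ the product of the primes in $(w, z]$. Let $(\lambda_d)_{d \ge 1}$ be any real numbers with $\lambda_1 = 1$ and $\lambda_d = 0$ for $d > z$. Then the number of primes $p \le x$ with $h < f(p+a) \le h+1$ is at most $3 \, \mathrm{Re} \int_{-1}^{1} (1-|t|) e^{-ith} \sum_{d_1 \mid R} \sum_{d_2 \mid R} \lambda_{d_1} \lambda_{d_2} \sum_{n \le x, \, (n,P)=1, \, n \equiv 0 \ (\mathrm{mod}\ [d_1, d_2])} e^{itf(n+a)} \, dt \ + 3z$, where $[d_1, d_2]$ denotes the least common multiple. -/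
/-!
Write `K u = ∫_{-1}^{1} (1 - |t|) cos (t u) dt` for the Fejér kernel. It equals `2 (1 - cos u) / u²`
for `u ≠ 0`, so it is nonnegative everywhere (`fejerKernel_nonneg`), and it is at least `1/3` on
`(0, 1]` (`third_le_fejerKernel`); thus `3 K (f (n + a) - h)` majorizes the indicator function of
`h < f (n + a) ≤ h + 1`. Interchanging the finite sums with the integral, the real part
on the right-hand side is `∑ n, (∑ d ∣ (n, R), λ_d)² K (f (n + a) - h)` over the `n ≤ x` coprime to
`P` (`re_integral_eq`), a sum of nonnegative terms. A prime `p > z` is coprime to `P` and to `R`, so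
it occurs in this sum and its square is `λ_1² = 1`. The primes `p ≤ z` number at most `z`.
-/

/-- An arithmetic function `f : ℕ → ℝ` is additive if `f (r*s) = f r + f s`
whenever `r` and `s` are coprime. -/
def IsAdditive (f : ℕ → ℝ) : Prop :=
  ∀ r s : ℕ, Nat.Coprime r s → f (r * s) = f r + f s

/-- The finite set of primes `p ≤ x`. -/
noncomputable def primesUpTo (x : ℝ) : Finset ℕ :=
  (Finset.Iic ⌊x⌋₊).filter Nat.Prime

/-- The Fejér kernel: the Fourier transform of the triangle function `t ↦ 1 - |t|` on `[-1, 1]`,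
written with a cosine since the triangle function is even. -/
noncomputable def fejerKernel (u : ℝ) : ℝ := ∫ t in (-1 : ℝ)..1, (1 - |t|) * Real.cos (t * u)

theorem fejerKernel_eq {u : ℝ} (hu : u ≠ 0) :
    fejerKernel u = 2 * (1 - Real.cos u) / u ^ 2 := by
  have hInt : ∀ b c : ℝ, IntervalIntegrable (fun t : ℝ => (1 - |t|) * Real.cos (t * u))
      MeasureTheory.volume b c := fun b c => Continuous.intervalIntegrable (by fun_prop) b c
  have hsin : ∀ t : ℝ, HasDerivAt (fun t : ℝ => Real.sin (t * u)) (Real.cos (t * u) * u) t :=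
    fun t => by simpa using ((hasDerivAt_id t).mul_const u).sin
  have hcos : ∀ t : ℝ, HasDerivAt (fun t : ℝ => Real.cos (t * u)) (-Real.sin (t * u) * u) t :=
    fun t => by simpa using ((hasDerivAt_id t).mul_const u).cos
  have h1 : ∫ t in (0 : ℝ)..1, (1 - |t|) * Real.cos (t * u) = (1 - Real.cos u) / u ^ 2 := by
    have hderiv : ∀ t : ℝ, HasDerivAt
        (fun t : ℝ => (1 - t) * Real.sin (t * u) / u - Real.cos (t * u) / u ^ 2)
        ((1 - t) * Real.cos (t * u)) t := by
      intro t
      have := ((((hasDerivAt_id t).const_sub 1).mul (hsin t)).div_const u).sub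
        ((hcos t).div_const (u ^ 2))
      refine this.congr_deriv ?_
      simp only [id]
      field_simp
      ring
    rw [intervalIntegral.integral_congr (g := fun t : ℝ => (1 - t) * Real.cos (t * u)),
      intervalIntegral.integral_eq_sub_of_hasDerivAt (fun t _ => hderiv t)
        (Continuous.intervalIntegrable (by fun_prop) _ _)]
    · simp
      field_simp
      ring
    · intro t ht
      rw [Set.uIcc_of_le zero_le_one] at ht
      simp only [abs_of_nonneg ht.1]
  have h2 : ∫ t in (-1 : ℝ)..0, (1 - |t|) * Real.cos (t * u) = (1 - Real.cos u) / u ^ 2 := by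
    have := intervalIntegral.integral_comp_neg (a := 0) (b := 1)
      (fun t : ℝ => (1 - |t|) * Real.cos (t * u))
    simp only [abs_neg, neg_mul, Real.cos_neg, neg_zero] at this
    rw [← this, h1]
  rw [fejerKernel, ← intervalIntegral.integral_add_adjacent_intervals (hInt (-1) 0) (hInt 0 1),
    h1, h2]
  ring

theorem fejerKernel_nonneg (u : ℝ) : 0 ≤ fejerKernel u := by
  rcases eq_or_ne u 0 with rfl | hu
  · refine intervalIntegral.integral_nonneg (by norm_num) fun t ht => ?_
    have : |t| ≤ 1 := abs_le.2 ht
    simpa using this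
  · rw [fejerKernel_eq hu]
    have := Real.cos_le_one u
    have : 0 ≤ 1 - Real.cos u := by linarith
    positivity

theorem third_le_fejerKernel {u : ℝ} (h0 : 0 < u) (h1 : u ≤ 1) : 1 / 3 ≤ fejerKernel u := by
  rw [fejerKernel_eq h0.ne', le_div_iff₀ (by positivity)]
  have hpi := Real.pi_gt_three
  have hpi' := Real.pi_lt_d2
  have hc := Real.cos_le_one_sub_mul_cos_sq (x := u) (by rw [abs_of_pos h0]; linarith)
  -- `π² < 12` turns the quadratic bound into `cos u ≤ 1 - u² / 6`.
  have hq : 1 / 6 ≤ 2 / Real.pi ^ 2 := by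
    rw [div_le_div_iff₀ (by norm_num) (by positivity)]
    nlinarith
  nlinarith [mul_le_mul_of_nonneg_right hq (sq_nonneg u)]

/-- The Fejér integral of a Selberg square expansion, with the sums interchanged. The set `s` of
admissible `n` and the frequencies `g n` are arbitrary. -/
theorem re_integral_eq (s : Finset ℕ) (g : ℕ → ℝ) (h : ℝ) (D : Finset ℕ) (lam : ℕ → ℝ) :
    (∫ t in (-1 : ℝ)..1, ((1 - |t| : ℝ) : ℂ) * Complex.exp (-(Complex.I * t * h)) *
        ∑ d₁ ∈ D, ∑ d₂ ∈ D, ((lam d₁ * lam d₂ : ℝ) : ℂ) *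
          ∑ n ∈ s with Nat.lcm d₁ d₂ ∣ n, Complex.exp (Complex.I * t * g n)).re
      = ∑ n ∈ s, (∑ d ∈ D with d ∣ n, lam d) ^ 2 * fejerKernel (g n - h) := by
  have hpt : ∀ t : ℝ, (((1 - |t| : ℝ) : ℂ) * Complex.exp (-(Complex.I * t * h)) *
        ∑ d₁ ∈ D, ∑ d₂ ∈ D, ((lam d₁ * lam d₂ : ℝ) : ℂ) *
          ∑ n ∈ s with Nat.lcm d₁ d₂ ∣ n, Complex.exp (Complex.I * t * g n)).re
      = ∑ n ∈ s, (∑ d ∈ D with d ∣ n, lam d) ^ 2 * ((1 - |t|) * Real.cos (t * (g n - h))) := by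
    intro t
    have hswap : ∑ d₁ ∈ D, ∑ d₂ ∈ D, ((lam d₁ * lam d₂ : ℝ) : ℂ) *
          ∑ n ∈ s with Nat.lcm d₁ d₂ ∣ n, Complex.exp (Complex.I * t * g n)
        = ∑ n ∈ s, (((∑ d ∈ D with d ∣ n, lam d) ^ 2 : ℝ) : ℂ) *
            Complex.exp (Complex.I * t * g n) := by
      simp only [Finset.sum_filter, Finset.mul_sum]
      rw [Finset.sum_congr rfl fun d₁ _ => Finset.sum_comm, Finset.sum_comm]
      refine Finset.sum_congr rfl fun n _ => ?_
      rw [sq, Finset.sum_mul_sum, Complex.ofReal_sum, Finset.sum_mul]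
      refine Finset.sum_congr rfl fun d₁ _ => ?_
      rw [Complex.ofReal_sum, Finset.sum_mul]
      refine Finset.sum_congr rfl fun d₂ _ => ?_
      by_cases h1 : d₁ ∣ n <;> by_cases h2 : d₂ ∣ n <;> simp [Nat.lcm_dvd_iff, h1, h2]
    rw [hswap, Finset.mul_sum, Complex.re_sum]
    refine Finset.sum_congr rfl fun n _ => ?_
    have hexp : ((1 - |t| : ℝ) : ℂ) * Complex.exp (-(Complex.I * t * h)) *
          ((((∑ d ∈ D with d ∣ n, lam d) ^ 2 : ℝ) : ℂ) * Complex.exp (Complex.I * t * g n))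
        = (((∑ d ∈ D with d ∣ n, lam d) ^ 2 * (1 - |t|) : ℝ) : ℂ) *
          Complex.exp ((t * (g n - h) : ℝ) * Complex.I) := by
      have : (((t * (g n - h) : ℝ) : ℂ) * Complex.I)
          = -(Complex.I * t * h) + Complex.I * t * g n := by
        push_cast
        ring
      rw [this, Complex.exp_add]
      push_cast
      ring
    rw [hexp, Complex.re_ofReal_mul, Complex.exp_ofReal_mul_I_re, mul_assoc]
  have hre := Complex.reCLM.intervalIntegral_comp_comm (a := -1) (b := 1)
    (μ := MeasureTheory.volume)
    (f := fun t : ℝ => ((1 - |t| : ℝ) : ℂ) * Complex.exp (-(Complex.I * t * h)) *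
        ∑ d₁ ∈ D, ∑ d₂ ∈ D, ((lam d₁ * lam d₂ : ℝ) : ℂ) *
          ∑ n ∈ s with Nat.lcm d₁ d₂ ∣ n, Complex.exp (Complex.I * t * g n))
    (Continuous.intervalIntegrable (by fun_prop) _ _)
  simp only [Complex.reCLM_apply, hpt] at hre
  rw [← hre, intervalIntegral.integral_finsetSum
    fun n _ => Continuous.intervalIntegrable (by fun_prop) _ _]
  simp only [intervalIntegral.integral_const_mul, fejerKernel]

/-- The Selberg-sieve majorization (2): the number of primes `p ≤ x` with
`h < f(p+a) ≤ h+1` is bounded by the Fejér integral of a Selberg square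
expansion plus `3z`.  Here `P` is the product of the primes in `(3|a|, w]` and
`R` the product of the primes in `(w, z]`. -/
theorem selberg_square_majorization (a : ℤ) (ha : a ≠ 0) (f : ℕ → ℝ)
    (hf : IsAdditive f) (h x : ℝ) (hx : 2 ≤ x)
    (w z : ℝ) (hw : 3 * (|a| : ℝ) ≤ w) (hwz : w ≤ z) (hzx : z ≤ x)
    (P R : ℕ)
    (hP : P = ∏ p ∈ (Finset.Iic ⌊w⌋₊).filter
        (fun p : ℕ => p.Prime ∧ 3 * (|a| : ℝ) < (p : ℝ) ∧ (p : ℝ) ≤ w), p)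
    (hR : R = ∏ p ∈ (Finset.Iic ⌊z⌋₊).filter
        (fun p : ℕ => p.Prime ∧ w < (p : ℝ) ∧ (p : ℝ) ≤ z), p)
    (lam : ℕ → ℝ) (hlam1 : lam 1 = 1) (hlamz : ∀ d : ℕ, z < (d : ℝ) → lam d = 0) :
    (((primesUpTo x).filter (fun p : ℕ =>
        0 < (p : ℤ) + a ∧ h < f ((p : ℤ) + a).toNat ∧ f ((p : ℤ) + a).toNat ≤ h + 1)).card : ℝ)
      ≤ 3 * (∫ t in (-1 : ℝ)..1, ((1 - |t| : ℝ) : ℂ) *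
            Complex.exp (-(Complex.I * t * h)) *
            ∑ d₁ ∈ R.divisors, ∑ d₂ ∈ R.divisors,
              ((lam d₁ * lam d₂ : ℝ) : ℂ) *
                ∑ n ∈ (Finset.Icc 1 ⌊x⌋₊).filter
                    (fun n : ℕ => Nat.gcd n P = 1 ∧ Nat.lcm d₁ d₂ ∣ n ∧
                      0 < (n : ℤ) + a),
                  Complex.exp (Complex.I * t * f ((n : ℤ) + a).toNat)).re
        + 3 * z := by
  set s : Finset ℕ := (Finset.Icc 1 ⌊x⌋₊).filter
    (fun n : ℕ => Nat.gcd n P = 1 ∧ 0 < (n : ℤ) + a) with hs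
  have hfilter : ∀ d₁ d₂ : ℕ, (Finset.Icc 1 ⌊x⌋₊).filter
      (fun n : ℕ => Nat.gcd n P = 1 ∧ Nat.lcm d₁ d₂ ∣ n ∧ 0 < (n : ℤ) + a)
      = s.filter (fun n => Nat.lcm d₁ d₂ ∣ n) := by
    intro d₁ d₂
    ext n
    simp only [hs, Finset.mem_filter]
    tauto
  simp only [hfilter]
  rw [re_integral_eq s (fun n => f ((n : ℤ) + a).toNat) h R.divisors lam]
  have hz : 0 ≤ z := by
    have := abs_nonneg (a : ℝ)
    linarith
  -- A prime exceeding `z` divides no product of primes that are at most `z`.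
  have hcop : ∀ p : ℕ, p.Prime → z < p → ∀ T : Finset ℕ,
      (∀ q ∈ T, q.Prime ∧ (q : ℝ) ≤ z) → Nat.Coprime p (∏ q ∈ T, q) := by
    intro p hp hzp T hT
    refine Nat.Coprime.prod_right fun q hq => (Nat.coprime_primes hp (hT q hq).1).2 ?_
    rintro rfl
    exact absurd (hT p hq).2 (not_le.2 hzp)
  have hR0 : R ≠ 0 := by
    rw [hR]
    exact Finset.prod_ne_zero_iff.2 fun q hq => (Finset.mem_filter.1 hq).2.1.ne_zero
  set A := (primesUpTo x).filter (fun p : ℕ =>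
    0 < (p : ℤ) + a ∧ h < f ((p : ℤ) + a).toNat ∧ f ((p : ℤ) + a).toNat ≤ h + 1) with hA
  have hsmall : ((A.filter fun p : ℕ => (p : ℝ) ≤ z).card : ℝ) ≤ z := by
    have hsub : (A.filter fun p : ℕ => (p : ℝ) ≤ z) ⊆ Finset.Icc 1 ⌊z⌋₊ := by
      intro p hp
      simp only [hA, primesUpTo, Finset.mem_filter] at hp
      exact Finset.mem_Icc.2 ⟨hp.1.1.2.one_le, Nat.le_floor hp.2⟩
    have hcard := Finset.card_le_card hsub
    rw [Nat.card_Icc, Nat.add_sub_cancel] at hcard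
    exact (Nat.cast_le.2 hcard).trans (Nat.floor_le hz)
  have hlarge : ((A.filter fun p : ℕ => ¬ (p : ℝ) ≤ z).card : ℝ)
      ≤ 3 * ∑ n ∈ s, (∑ d ∈ R.divisors with d ∣ n, lam d) ^ 2 *
          fejerKernel (f ((n : ℤ) + a).toNat - h) := by
    rw [Finset.mul_sum, Finset.card_eq_sum_ones, Nat.cast_sum]
    have hmem : ∀ p ∈ A.filter (fun p : ℕ => ¬ (p : ℝ) ≤ z), p ∈ s ∧ Nat.Coprime p R ∧
        1 / 3 ≤ fejerKernel (f ((p : ℤ) + a).toNat - h) := by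
      intro p hp
      simp only [hA, primesUpTo, Finset.mem_filter, Finset.mem_Iic, not_le] at hp
      obtain ⟨⟨⟨hpx, hpp⟩, hpos, hlo, hhi⟩, hzp⟩ := hp
      refine ⟨?_, ?_, third_le_fejerKernel (by linarith) (by linarith)⟩
      · refine Finset.mem_filter.2 ⟨Finset.mem_Icc.2 ⟨hpp.one_le, hpx⟩, ?_, hpos⟩
        rw [hP]
        refine hcop p hpp hzp _ fun q hq => ?_
        have hq := (Finset.mem_filter.1 hq).2
        exact ⟨hq.1, hq.2.2.trans hwz⟩
      · rw [hR]
        refine hcop p hpp hzp _ fun q hq => ?_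
        have hq := (Finset.mem_filter.1 hq).2
        exact ⟨hq.1, hq.2.2⟩
    refine (Finset.sum_le_sum fun p hp => ?_).trans
      (Finset.sum_le_sum_of_subset_of_nonneg (fun p hp => (hmem p hp).1) fun n _ _ => ?_)
    · obtain ⟨-, hpR, hK⟩ := hmem p hp
      have hdiv : (R.divisors.filter fun d => d ∣ p) = {1} := by
        ext d
        simp only [Finset.mem_filter, Nat.mem_divisors, Finset.mem_singleton]
        refine ⟨fun hd => Nat.eq_one_of_dvd_coprimes hpR hd.2 hd.1.1, ?_⟩
        rintro rfl
        exact ⟨⟨one_dvd _, hR0⟩, one_dvd _⟩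
      rw [hdiv, Finset.sum_singleton, hlam1]
      push_cast
      linarith
    · have := fejerKernel_nonneg (f ((n : ℤ) + a).toNat - h)
      positivity
  have hsplit := Finset.card_filter_add_card_filter_not (s := A) (fun p : ℕ => (p : ℝ) ≤ z)
  have hsplit' : ((A.filter fun p : ℕ => (p : ℝ) ≤ z).card : ℝ)
      + ((A.filter fun p : ℕ => ¬ (p : ℝ) ≤ z).card : ℝ) = A.card := by
    exact_mod_cast hsplit
  linarith
end

section
/- There is an absolute constant $C$ such that for every real-valued additive arithmetic function $f$ and every $x \ge 2$: $\inf_{|\lambda| \le (\log x)^2} \Big( \lambda^2 + \sum_{p \le x} \tfrac{1}{p} \min(1, |f(p) - \lambda \log p|)^2 \Big) \le C \Big( 4 + \inf_{\lambda \in \mathbb{R}} \Big( \lambda^2 + \sum_{p \le x} \tfrac{1}{p} \min(1, |f(p) - \lambda \log p|)^2 \Big) \Big)$, the sums being over primes $p \le x$; that is, in the definition of $W(x)$ the minimizing parameter $\lambda$ may be restricted to $|\lambda| \le (\log x)^2$ at the cost of an absolute constant factor. -/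
/-- Comparison with the harmonic series; this crude bound is enough, so no Mertens-type estimate
is needed. -/
lemma sum_primesUpTo_le (x : ℝ) (hx : 1 ≤ x) :
    ∑ p ∈ primesUpTo x, (1 / (p : ℝ)) ≤ 1 + Real.log x := by
  refine le_trans ?_ (harmonic_floor_le_one_add_log x hx)
  rw [harmonic_eq_sum_Icc]
  push_cast
  simp only [one_div]
  refine Finset.sum_le_sum_of_subset_of_nonneg ?_ (fun i _ _ => by positivity)
  intro p hp
  simp only [primesUpTo, Finset.mem_filter, Finset.mem_Iic] at hp
  exact Finset.mem_Icc.2 ⟨hp.2.one_lt.le, hp.1⟩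

/-- In the definition of `W(x)` the minimizing parameter `λ` may be restricted
to `|λ| ≤ (log x)²` at the cost of an absolute constant factor. -/
theorem lambda_restriction :
    ∃ C : ℝ, ∀ f : ℕ → ℝ, IsAdditive f → ∀ x : ℝ, 2 ≤ x →
      sInf ((fun lam : ℝ => lam ^ 2 +
          ∑ p ∈ primesUpTo x, (1 / (p : ℝ)) * min 1 |f p - lam * Real.log p| ^ 2) ''
        {lam : ℝ | |lam| ≤ Real.log x ^ 2})
      ≤ C * (4 + ⨅ lam : ℝ, (lam ^ 2 +
          ∑ p ∈ primesUpTo x, (1 / (p : ℝ)) * min 1 |f p - lam * Real.log p| ^ 2)) := by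
  refine ⟨1, fun f _ x hx => ?_⟩
  set g : ℝ → ℝ := fun lam : ℝ => lam ^ 2 +
    ∑ p ∈ primesUpTo x, (1 / (p : ℝ)) * min 1 |f p - lam * Real.log p| ^ 2 with hg
  have hsq : ∀ lam, lam ^ 2 ≤ g lam := fun lam =>
    le_add_of_nonneg_right (Finset.sum_nonneg fun p _ => by positivity)
  have hbdd : BddBelow (g '' {lam : ℝ | |lam| ≤ Real.log x ^ 2}) := by
    refine ⟨0, ?_⟩
    rintro _ ⟨lam, -, rfl⟩
    exact (sq_nonneg lam).trans (hsq lam)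
  have hle : ∀ lam, |lam| ≤ Real.log x ^ 2 →
      sInf (g '' {lam : ℝ | |lam| ≤ Real.log x ^ 2}) ≤ g lam :=
    fun lam h => csInf_le hbdd ⟨lam, h, rfl⟩
  have h0 : g 0 ≤ 1 + Real.log x := by
    refine le_trans ?_ (sum_primesUpTo_le x (by linarith))
    simp only [hg, ne_eq, OfNat.ofNat_ne_zero, not_false_eq_true, zero_pow, zero_add]
    refine Finset.sum_le_sum fun p _ => mul_le_of_le_one_right (by positivity) ?_
    exact pow_le_one₀ (by positivity) (min_le_left _ _)
  rw [one_mul, ← sub_le_iff_le_add']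
  refine le_ciInf fun lam => ?_
  change _ ≤ g lam
  rcases le_or_gt |lam| (Real.log x ^ 2) with h | h
  · linarith [hle lam h]
  · have h1 := hle 0 (by rw [abs_zero]; positivity)
    have h2 : (Real.log x ^ 2) ^ 2 ≤ lam ^ 2 := by
      rw [← sq_abs lam]
      exact pow_le_pow_left₀ (by positivity) h.le 2
    nlinarith [hsq lam, sq_nonneg (Real.log x - 1), sq_nonneg (Real.log x ^ 2 - 1)]
end
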